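/- arXiv:math/0403510 — 2 statements merged into one kernel-verified Lean document; each statement's English description precedes it below -/
import Mathlib

section
/- The real Gamma function satisfies Γ(3/10) = (√π · φ* / (2^(3/5) · √5)) · Γ(1/5) · Γ(2/5)⁻¹, where φ* = 5 − √5. -/
open Real

/-!
The duplication formula expresses `Γ(1/5) Γ(7/10)` through `Γ(2/5)`, and Euler's
reflection formula about `1/2` gives `Γ(7/10) Γ(3/10) = π / cos (π/5)`. Eliminating `Γ(7/10)` leaves
the trigonometric factor `1 / cos (π/5) = √5 - 1 = φ* / √5`.
-/

lemma Gamma_half_add_mul_Gamma_half_sub (s : ℝ) :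
    Gamma (1 / 2 + s) * Gamma (1 / 2 - s) = π / cos (π * s) := by
  calc Gamma (1 / 2 + s) * Gamma (1 / 2 - s)
    _ = Gamma (1 / 2 + s) * Gamma (1 - (1 / 2 + s)) := by ring_nf
    _ = π / sin (π * (1 / 2 + s)) := Gamma_mul_Gamma_one_sub _
    _ = π / sin (π * s + π / 2) := by ring_nf
    _ = π / cos (π * s) := by rw [sin_add_pi_div_two]

-- Where `cos (π * s)` vanishes, `1 / 2 - s` or `2 * s` is a pole of `Γ`: both sides are junk `0`.
lemma Gamma_half_sub_mul_Gamma_two_mul (s : ℝ) :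
    Gamma (1 / 2 - s) * Gamma (2 * s) = √π * 2 ^ (2 * s - 1) * Gamma s / cos (π * s) := by
  have two_rpow : (2 : ℝ) ^ (1 - 2 * s) = (2 ^ (2 * s - 1))⁻¹ := by
    rw [← rpow_neg zero_le_two, neg_sub]
  calc Gamma (1 / 2 - s) * Gamma (2 * s)
    _ = 2 ^ (2 * s - 1) / √π * (Gamma (2 * s) * 2 ^ (1 - 2 * s) * √π) * Gamma (1 / 2 - s) := by
      rw [two_rpow]
      field_simp
    _ = 2 ^ (2 * s - 1) / √π * (Gamma s * Gamma (s + 1 / 2)) * Gamma (1 / 2 - s) := by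
      rw [Gamma_mul_Gamma_add_half]
    _ = 2 ^ (2 * s - 1) / √π * Gamma s * (Gamma (1 / 2 + s) * Gamma (1 / 2 - s)) := by
      ring_nf
    _ = π / √π * 2 ^ (2 * s - 1) * Gamma s / cos (π * s) := by
      rw [Gamma_half_add_mul_Gamma_half_sub]
      ring
    _ = √π * 2 ^ (2 * s - 1) * Gamma s / cos (π * s) := by
      rw [div_sqrt]

lemma inv_cos_pi_div_five : (cos (π / 5))⁻¹ = √5 - 1 := by
  have sqrt_five_mul_self : √5 * √5 = (5 : ℝ) := mul_self_sqrt (by norm_num)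
  rw [cos_pi_div_five]
  exact inv_eq_of_mul_eq_one_right (by linear_combination sqrt_five_mul_self / 4)

theorem gamma_three_tenths :
    Real.Gamma (3/10) =
      (Real.sqrt π * (5 - Real.sqrt 5) / ((2:ℝ) ^ ((3:ℝ)/5) * Real.sqrt 5)) *
        Real.Gamma (1/5) * (Real.Gamma (2/5))⁻¹ := by
  have inv_cos : (cos (π / 5))⁻¹ = (5 - √5) / √5 := by
    rw [inv_cos_pi_div_five, sub_div, div_sqrt, div_self (by positivity)]
  have product : Gamma (3 / 10) * Gamma (2 / 5) =
      √π * 2 ^ (-(3 / 5) : ℝ) * Gamma (1 / 5) / cos (π / 5) := by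
    convert Gamma_half_sub_mul_Gamma_two_mul (1 / 5) using 3 <;> norm_num [div_eq_mul_inv]
  have Gamma_ne_zero : Gamma (2 / 5) ≠ 0 := (Gamma_pos_of_pos (by norm_num)).ne'
  rw [eq_mul_inv_iff_mul_eq₀ Gamma_ne_zero, product, rpow_neg zero_le_two, div_eq_mul_inv _ (cos _),
    inv_cos]
  ring
end

section
/- The real Gamma function satisfies Γ(5/12) = (√π · 2^(1/4) · √(√3 − 1) / 3^(1/8)) · Γ(1/4) · Γ(1/3)⁻¹. -/
open Real

/-!
Dividing a product of two values of `Γ` by a third,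
`Γ(5/12)² = [Γ(1/12) Γ(5/12)] [Γ(5/12) Γ(7/12)] / [Γ(1/12) Γ(7/12)]`.
The first bracket comes from Gauss's multiplication formula with `n = 3` at `s = 1/12` and Euler's
reflection formula at `1/4`, the second from the reflection formula at `5/12`, and the third from
Legendre's duplication formula at `1/12` and `1/6` and the reflection formula at `1/3`.

Gauss's formula itself follows from the Bohr–Mollerup theorem, its constant being given by the
reflection formula and `∏_{0 < k < n} 2 sin (π k / n) = n`, which is the value at `1` of
`(Xⁿ - 1) / (X - 1)` in absolute value.
-/

section GaussMultiplication

open Finset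

theorem prod_sin_pi_mul_succ_div_succ (n : ℕ) :
    ∏ k ∈ range n, sin (π * ((k + 1) / (n + 1))) = (n + 1) / 2 ^ n := by
  have norm_factor (k : ℕ) (hk : k ∈ range n) :
      ‖Complex.exp (2 * π * Complex.I / (n + 1 : ℕ)) ^ (k + 1) - 1‖ =
        2 * sin (π * ((k + 1) / (n + 1))) := by
    have ratio_le_one : ((k : ℝ) + 1) / (n + 1) ≤ 1 := by
      rw [div_le_one (by positivity)]
      exact_mod_cast Nat.succ_le_succ (mem_range.1 hk).le
    have sin_nonneg : 0 ≤ sin (π * ((k + 1) / (n + 1))) :=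
      sin_nonneg_of_nonneg_of_le_pi (by positivity) (mul_le_of_le_one_right pi_pos.le ratio_le_one)
    have exponent_eq : ((k + 1 : ℕ) : ℂ) * (2 * π * Complex.I / (n + 1 : ℕ)) =
        Complex.I * (2 * (π * ((k + 1) / (n + 1))) : ℝ) := by
      push_cast; ring
    rw [← Complex.exp_nat_mul, exponent_eq, Complex.norm_exp_I_mul_ofReal_sub_one,
      mul_div_cancel_left₀ _ two_ne_zero, norm_of_nonneg (by positivity)]
  have prod_norm : ∏ k ∈ range n, 2 * sin (π * ((k + 1) / (n + 1))) = n + 1 := by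
    have h := congrArg norm
      (Complex.isPrimitiveRoot_exp (n + 1) n.succ_ne_zero).prod_pow_sub_one_eq_order
    rw [norm_mul, norm_pow, norm_neg, norm_one, one_pow, one_mul, norm_prod,
      prod_congr rfl norm_factor] at h
    rw [h]
    exact_mod_cast Complex.norm_natCast (n + 1)
  rw [prod_mul_distrib, prod_const, card_range] at prod_norm
  rw [eq_div_iff (by positivity), mul_comm, prod_norm]

theorem prod_Gamma_succ_div_succ (n : ℕ) :
    ∏ k ∈ range n, Gamma ((k + 1) / (n + 1)) = √((2 * π) ^ n / (n + 1)) := by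
  have prod_reflect : ∏ k ∈ range n, Gamma (1 - (k + 1) / (n + 1)) =
      ∏ k ∈ range n, Gamma ((k + 1) / (n + 1)) := by
    rw [← prod_range_reflect]
    refine prod_congr rfl fun k hk => congrArg Gamma ?_
    have hkn : k + 1 ≤ n := mem_range.1 hk
    rw [Nat.sub_sub, add_comm 1 k, Nat.cast_sub hkn]
    push_cast
    field
  rw [eq_comm, sqrt_eq_iff_mul_self_eq (by positivity)
    (prod_nonneg fun k _ => (Gamma_pos_of_pos (by positivity)).le)]
  nth_rw 2 [← prod_reflect]
  rw [← prod_mul_distrib]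
  simp only [Gamma_mul_Gamma_one_sub]
  rw [prod_div_distrib, prod_const, card_range, prod_sin_pi_mul_succ_div_succ, mul_pow]
  field

variable {n : ℕ} {s : ℝ}

theorem prod_Gamma_one_add_div (hn : n ≠ 0) :
    ∏ k ∈ range n, Gamma ((1 + k) / n) = (2 * π) ^ ((n - 1 : ℝ) / 2) / √n := by
  obtain ⟨m, rfl⟩ := Nat.exists_eq_succ_of_ne_zero hn
  have last_eq_one : Gamma ((m + 1) / (m + 1)) = 1 := by
    rw [div_self (by positivity), Gamma_one]
  simp only [Nat.cast_succ, add_comm (1 : ℝ)]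
  rw [prod_range_succ, last_eq_one, mul_one, prod_Gamma_succ_div_succ, sqrt_div (by positivity),
    add_sub_cancel_right, sqrt_eq_rpow, ← rpow_natCast, ← rpow_mul (by positivity), mul_one_div]

/-- The function which Gauss's multiplication formula asserts to be `Γ`, normalized so that its
value at `1` is visibly `1`. It is meant for `n ≠ 0` and `0 < s`. -/
noncomputable def gaussGamma (n : ℕ) (s : ℝ) : ℝ :=
  n ^ (s - 1) * ∏ k ∈ range n, Gamma ((s + k) / n) / Gamma ((1 + k) / n)

theorem Gamma_add_div_pos (hn : n ≠ 0) (hs : 0 < s) (k : ℕ) : 0 < Gamma ((s + k) / n) :=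
  Gamma_pos_of_pos (by positivity)

theorem gaussGamma_pos (hn : n ≠ 0) (hs : 0 < s) : 0 < gaussGamma n s :=
  mul_pos (by positivity) <| prod_pos fun k _ =>
    div_pos (Gamma_add_div_pos hn hs k) (Gamma_add_div_pos hn one_pos k)

theorem gaussGamma_one (hn : n ≠ 0) : gaussGamma n 1 = 1 := by
  rw [gaussGamma, sub_self, rpow_zero, one_mul]
  exact prod_eq_one fun k _ => div_self (Gamma_add_div_pos hn one_pos k).ne'

theorem gaussGamma_add_one (hn : n ≠ 0) (hs : 0 < s) :
    gaussGamma n (s + 1) = s * gaussGamma n s := by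
  have first_ne_zero : Gamma (s / n) ≠ 0 := (Gamma_pos_of_pos (by positivity)).ne'
  have last_eq : Gamma ((s + n) / n) = s / n * Gamma (s / n) := by
    rw [add_div, div_self (by positivity), Gamma_add_one (by positivity)]
  have prod_shift : ∏ k ∈ range n, Gamma ((s + 1 + k) / n) =
      s / n * ∏ k ∈ range n, Gamma ((s + k) / n) := by
    have h := (prod_range_succ' (fun k : ℕ => Gamma ((s + k) / n)) n).symm.trans
      (prod_range_succ (fun k : ℕ => Gamma ((s + k) / n)) n)
    simp only [Nat.cast_zero, add_zero, Nat.cast_succ, last_eq] at h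
    refine mul_right_cancel₀ first_ne_zero ?_
    simp only [add_assoc, add_comm (1 : ℝ), h]
    ring
  rw [gaussGamma, gaussGamma, prod_div_distrib, prod_div_distrib, prod_shift,
    add_sub_right_comm, rpow_add_one (by positivity)]
  field

theorem log_gaussGamma (hn : n ≠ 0) (hs : 0 < s) :
    log (gaussGamma n s) = (s - 1) * log n +
      ∑ k ∈ range n, (log (Gamma ((s + k) / n)) - log (Gamma ((1 + k) / n))) := by
  have ne_zero {t : ℝ} (ht : 0 < t) (k : ℕ) : Gamma ((t + k) / n) ≠ 0 :=
    (Gamma_add_div_pos hn ht k).ne'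
  rw [gaussGamma, log_mul (by positivity)
    (prod_ne_zero_iff.2 fun k _ => div_ne_zero (ne_zero hs k) (ne_zero one_pos k)),
    log_rpow (by positivity), log_prod fun k _ => div_ne_zero (ne_zero hs k) (ne_zero one_pos k)]
  simp only [log_div (ne_zero hs _) (ne_zero one_pos _)]

theorem convexOn_log_Gamma_add_div {a b : ℝ} (ha : 0 ≤ a) (hb : 0 < b) :
    ConvexOn ℝ (Set.Ioi 0) fun s => log (Gamma ((s + a) / b)) := by
  have lineMap_eq (s : ℝ) : AffineMap.lineMap (a / b) ((1 + a) / b) s = (s + a) / b := by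
    rw [AffineMap.lineMap_apply_ring']
    ring
  refine ((convexOn_log_Gamma.comp_affineMap (AffineMap.lineMap (a / b) ((1 + a) / b))).subset
    (fun s hs => ?_) (convex_Ioi 0)).congr fun s _ => ?_
  · rw [Set.mem_preimage, lineMap_eq]
    exact div_pos (add_pos_of_pos_of_nonneg hs ha) hb
  · simp only [Function.comp_apply, lineMap_eq]

theorem convexOn_log_gaussGamma (hn : n ≠ 0) :
    ConvexOn ℝ (Set.Ioi 0) (log ∘ gaussGamma n) := by
  have convexOn_linear : ConvexOn ℝ (Set.Ioi 0) fun s : ℝ => (s - 1) * log n :=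
    ⟨convex_Ioi 0, fun x _ y _ a b _ _ hab => le_of_eq <| by
      simp only [smul_eq_mul]
      linear_combination log n * hab⟩
  have convexOn_sum : ConvexOn ℝ (Set.Ioi 0) (∑ k ∈ range n, fun s : ℝ =>
      log (Gamma ((s + k) / n)) - log (Gamma ((1 + k) / n))) :=
    sum_induction _ (ConvexOn ℝ (Set.Ioi 0)) (fun _ _ => ConvexOn.add)
      (convexOn_const 0 (convex_Ioi 0)) fun k _ =>
        (convexOn_log_Gamma_add_div k.cast_nonneg (by positivity)).sub
          (concaveOn_const _ (convex_Ioi 0))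
  refine (convexOn_linear.add convexOn_sum).congr fun s hs => ?_
  rw [Function.comp_apply, log_gaussGamma hn hs, Pi.add_apply, Finset.sum_apply]

theorem gaussGamma_eq_Gamma (hn : n ≠ 0) (hs : 0 < s) : gaussGamma n s = Gamma s :=
  eq_Gamma_of_log_convex (convexOn_log_gaussGamma hn) (gaussGamma_add_one hn)
    (gaussGamma_pos hn) (gaussGamma_one hn) hs

theorem prod_Gamma_add_div (hn : n ≠ 0) (hs : 0 < s) :
    ∏ k ∈ range n, Gamma (s + k / n) =
      (2 * π) ^ ((n - 1 : ℝ) / 2) * n ^ (1 / 2 - n * s) * Gamma (n * s) := by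
  have numerator_eq (k : ℕ) : s + k / n = (n * s + k) / n := by field
  simp only [numerator_eq]
  have powers_cancel : (n : ℝ) ^ (1 / 2 - n * s) * n ^ (n * s - 1) * √n = 1 := by
    rw [sqrt_eq_rpow, ← rpow_add (by positivity), ← rpow_add (by positivity), ← rpow_zero (n : ℝ)]
    ring_nf
  rw [← gaussGamma_eq_Gamma hn (by positivity), gaussGamma, prod_div_distrib,
    prod_Gamma_one_add_div hn]
  calc ∏ k ∈ range n, Gamma ((n * s + k) / n)
      = n ^ (1 / 2 - n * s) * n ^ (n * s - 1) * √n *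
          ∏ k ∈ range n, Gamma ((n * s + k) / n) := by rw [powers_cancel, one_mul]
    _ = _ := by field

end GaussMultiplication

theorem Gamma_quarter_mul_Gamma_three_quarters : Gamma (1 / 4) * Gamma (3 / 4) = √2 * π := by
  rw [show (3 / 4 : ℝ) = 1 - 1 / 4 by norm_num, Gamma_mul_Gamma_one_sub, mul_one_div,
    sin_pi_div_four, div_div_eq_mul_div, div_eq_iff (by positivity)]
  linear_combination -π * sq_sqrt zero_le_two

theorem Gamma_third_mul_Gamma_two_thirds : Gamma (1 / 3) * Gamma (2 / 3) = 2 * π / √3 := by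
  rw [show (2 / 3 : ℝ) = 1 - 1 / 3 by norm_num, Gamma_mul_Gamma_one_sub, mul_one_div,
    sin_pi_div_three]
  field

theorem sin_five_pi_div_twelve : sin (5 * π / 12) = √2 * (√3 + 1) / 4 := by
  rw [show 5 * π / 12 = π / 4 + π / 6 by ring, sin_add, sin_pi_div_four, cos_pi_div_four,
    sin_pi_div_six, cos_pi_div_six]
  ring

theorem Gamma_five_twelfths_mul_Gamma_seven_twelfths :
    Gamma (5 / 12) * Gamma (7 / 12) = √2 * (√3 - 1) * π := by
  rw [show (7 / 12 : ℝ) = 1 - 5 / 12 by norm_num, Gamma_mul_Gamma_one_sub,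
    show π * (5 / 12) = 5 * π / 12 by ring, sin_five_pi_div_twelve, div_eq_iff (by positivity)]
  have sq_sqrt_two : √2 ^ 2 = 2 := sq_sqrt zero_le_two
  have sq_sqrt_three : √3 ^ 2 = 3 := sq_sqrt zero_le_three
  linear_combination π / 4 * (1 - √3 ^ 2) * sq_sqrt_two - π / 2 * sq_sqrt_three

theorem Gamma_twelfth_mul_Gamma_five_twelfths :
    Gamma (1 / 12) * Gamma (5 / 12) = √2 * 3 ^ (1 / 4 : ℝ) * Gamma (1 / 4) ^ 2 := by
  have triplication : Gamma (1 / 12) * Gamma (5 / 12) * Gamma (3 / 4) =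
      2 * π * 3 ^ (1 / 4 : ℝ) * Gamma (1 / 4) := by
    convert prod_Gamma_add_div three_ne_zero (s := 1 / 12) (by norm_num) using 2 <;>
      norm_num [Finset.prod_range_succ]
  have Gamma_pos : 0 < Gamma (3 / 4) := Gamma_pos_of_pos (by norm_num)
  refine mul_right_cancel₀ Gamma_pos.ne' ?_
  calc Gamma (1 / 12) * Gamma (5 / 12) * Gamma (3 / 4)
      = √2 ^ 2 * π * 3 ^ (1 / 4 : ℝ) * Gamma (1 / 4) := by
        rw [triplication, sq_sqrt zero_le_two]
    _ = √2 * 3 ^ (1 / 4 : ℝ) * Gamma (1 / 4) ^ 2 * Gamma (3 / 4) := by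
        linear_combination
          -√2 * 3 ^ (1 / 4 : ℝ) * Gamma (1 / 4) * Gamma_quarter_mul_Gamma_three_quarters

theorem Gamma_mul_Gamma_add_half_mul_Gamma_two_mul_add_half (s : ℝ) :
    Gamma s * Gamma (s + 1 / 2) * Gamma (2 * s + 1 / 2) =
      2 ^ (2 - 6 * s) * π * Gamma (4 * s) :=
  calc Gamma s * Gamma (s + 1 / 2) * Gamma (2 * s + 1 / 2)
      = 2 ^ (1 - 2 * s) * √π * (Gamma (2 * s) * Gamma (2 * s + 1 / 2)) := by
        rw [Gamma_mul_Gamma_add_half]; ring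
    _ = 2 ^ (1 - 2 * s) * 2 ^ (1 - 2 * (2 * s)) * √π ^ 2 * Gamma (2 * (2 * s)) := by
        rw [Gamma_mul_Gamma_add_half]; ring
    _ = 2 ^ (2 - 6 * s) * π * Gamma (4 * s) := by
        rw [← rpow_add two_pos, sq_sqrt pi_pos.le]; ring_nf

theorem Gamma_twelfth_mul_Gamma_seven_twelfths :
    Gamma (1 / 12) * Gamma (7 / 12) = √2 * √3 * Gamma (1 / 3) ^ 2 := by
  have two_rpow : (2 : ℝ) ^ (3 / 2 : ℝ) = 2 * √2 := by
    rw [show (3 / 2 : ℝ) = 1 / 2 + 1 by norm_num, rpow_add_one two_ne_zero, ← sqrt_eq_rpow,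
      mul_comm]
  have double_duplication : Gamma (1 / 12) * Gamma (7 / 12) * Gamma (2 / 3) =
      2 * √2 * π * Gamma (1 / 3) := by
    have h := Gamma_mul_Gamma_add_half_mul_Gamma_two_mul_add_half (1 / 12)
    norm_num at h
    rw [h, two_rpow]
  have Gamma_pos : 0 < Gamma (2 / 3) := Gamma_pos_of_pos (by norm_num)
  refine mul_right_cancel₀ Gamma_pos.ne' ?_
  calc Gamma (1 / 12) * Gamma (7 / 12) * Gamma (2 / 3)
      = √2 * √3 * Gamma (1 / 3) * (2 * π / √3) := by
        rw [double_duplication]; field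
    _ = √2 * √3 * Gamma (1 / 3) ^ 2 * Gamma (2 / 3) := by
        rw [← Gamma_third_mul_Gamma_two_thirds]; ring

theorem Gamma_five_twelfths_sq :
    Gamma (5 / 12) ^ 2 =
      π * √2 * (√3 - 1) / 3 ^ (1 / 4 : ℝ) * (Gamma (1 / 4) / Gamma (1 / 3)) ^ 2 := by
  have Gamma_twelfth_pos : 0 < Gamma (1 / 12) := Gamma_pos_of_pos (by norm_num)
  have Gamma_seven_twelfths_pos : 0 < Gamma (7 / 12) := Gamma_pos_of_pos (by norm_num)
  have sqrt_three : √3 = 3 ^ (1 / 4 : ℝ) * 3 ^ (1 / 4 : ℝ) := by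
    rw [← rpow_add three_pos, sqrt_eq_rpow]; norm_num
  calc Gamma (5 / 12) ^ 2
      = Gamma (1 / 12) * Gamma (5 / 12) * (Gamma (5 / 12) * Gamma (7 / 12)) /
          (Gamma (1 / 12) * Gamma (7 / 12)) := by
        rw [eq_div_iff (mul_pos Gamma_twelfth_pos Gamma_seven_twelfths_pos).ne']
        ring
    _ = √2 * 3 ^ (1 / 4 : ℝ) * Gamma (1 / 4) ^ 2 * (√2 * (√3 - 1) * π) /
          (√2 * √3 * Gamma (1 / 3) ^ 2) := by
        rw [Gamma_twelfth_mul_Gamma_five_twelfths, Gamma_five_twelfths_mul_Gamma_seven_twelfths,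
          Gamma_twelfth_mul_Gamma_seven_twelfths]
    _ = 3 ^ (1 / 4 : ℝ) / √3 * (π * √2 * (√3 - 1)) * (Gamma (1 / 4) / Gamma (1 / 3)) ^ 2 := by
        field
    _ = π * √2 * (√3 - 1) / 3 ^ (1 / 4 : ℝ) * (Gamma (1 / 4) / Gamma (1 / 3)) ^ 2 := by
        rw [show 3 ^ (1 / 4 : ℝ) / √3 = 1 / 3 ^ (1 / 4 : ℝ) by rw [sqrt_three]; field]
        ring

theorem gamma_five_twelfths :
    Real.Gamma (5/12) =
      (Real.sqrt π * (2:ℝ) ^ ((1:ℝ)/4) * Real.sqrt (Real.sqrt 3 - 1) / (3:ℝ) ^ ((1:ℝ)/8)) *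
        Real.Gamma (1/4) * (Real.Gamma (1/3))⁻¹ := by
  have Gamma_nonneg {x : ℝ} (hx : 0 < x) : 0 ≤ Gamma x := (Gamma_pos_of_pos hx).le
  have ratio_nonneg : 0 ≤ Gamma (1 / 4) / Gamma (1 / 3) :=
    div_nonneg (Gamma_nonneg (by norm_num)) (Gamma_nonneg (by norm_num))
  have sqrt_rpow_quarter : √((3 : ℝ) ^ (1 / 4 : ℝ)) = 3 ^ (1 / 8 : ℝ) := by
    rw [sqrt_eq_rpow, ← rpow_mul zero_le_three]; norm_num
  have sqrt_sqrt_two : √√2 = 2 ^ (1 / 4 : ℝ) := by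
    rw [sqrt_eq_rpow, sqrt_eq_rpow, ← rpow_mul zero_le_two]; norm_num
  rw [← sqrt_sq (Gamma_nonneg (by norm_num : (0 : ℝ) < 5 / 12)), Gamma_five_twelfths_sq,
    sqrt_mul' _ (sq_nonneg _), sqrt_sq ratio_nonneg, sqrt_div' _ (by positivity),
    sqrt_mul (by positivity), sqrt_mul pi_pos.le, sqrt_rpow_quarter, sqrt_sqrt_two,
    div_eq_mul_inv (Gamma _), mul_assoc _ (Gamma _)]
end
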